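/- arXiv:2112.04727 — 4 statements merged into one kernel-verified Lean document; each statement's English description precedes it below -/
import Mathlib

section
/- Let T be a tree on a finite, nonempty, linearly ordered vertex type V with n = |V| vertices, and let m ≥ 1 be an integer. Let S be the m-order subdivision of T. Then the Wiener index of S satisfies W(S) = (m+1)^3·W(T) − m(m+1)^2·n^2/2 + m(m+1)(2m+1)·n/3 − m(m^2−1)/6; equivalently, 6·W(S) = 6(m+1)^3·W(T) − 3m(m+1)^2·n^2 + 2m(m+1)(2m+1)·n − m(m^2−1). -/
/-- The Wiener index of a finite simple graph: half the sum of the graph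
distances over all ordered pairs of vertices. -/
noncomputable def wienerIndex {V : Type*} [Fintype V] (G : SimpleGraph V) : ℚ :=
  (∑ u : V, ∑ v : V, (G.dist u v : ℚ)) / 2

/-- The `m`-order subdivision of a graph `T` on a linearly ordered vertex type:
every edge of `T` is replaced by a path of length `m + 1` through `m` new vertices. -/
def mSubdivision {V : Type*} [LinearOrder V] (T : SimpleGraph V) (m : ℕ) :
    SimpleGraph (V ⊕ (T.edgeSet × Fin m)) :=
  SimpleGraph.fromRel (fun x y =>
    match x, y with
    | Sum.inl u, Sum.inr (e, i) =>
        (i.val = 0 ∧ u = Sym2.inf e.1) ∨ (i.val = m - 1 ∧ u = Sym2.sup e.1)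
    | Sum.inr (e, i), Sum.inr (e', j) => e = e' ∧ i.val + 1 = j.val
    | _, _ => False)

/-!
In a tree, `dist u v` counts the edges whose removal separates `u` from `v`, so the Wiener index is
the sum of `n₁ * n₂` over the edges `e`, where `n₁` and `n₂` are the sizes of the two parts left
after removing `e` (Wiener). These parts have `n₁ - 1` and `n₂ - 1` edges, so removing the `k`-th
edge, `0 ≤ k ≤ m`, of the path that replaces `e` leaves parts of `(m + 1) * n₁ - m + k` and
`(m + 1) * n₂ - k` vertices. Since `n₁ + n₂ = n`, summing the products over `k` gives a combination
of `n₁ * n₂`, `n` and `1` with the same coefficients for each of the `n - 1` edges `e`.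
-/

open Finset SimpleGraph

theorem card_filter_xor_mem {V : Type*} [Fintype V] [DecidableEq V] (s : Finset V) :
    #{p : V × V | Xor (p.1 ∈ s) (p.2 ∈ s)} = 2 * (#s * #sᶜ) := by
  have hdisj : Disjoint (s ×ˢ sᶜ) (sᶜ ×ˢ s) :=
    disjoint_product.2 (.inl disjoint_compl_right)
  have hunion : ({p | Xor (p.1 ∈ s) (p.2 ∈ s)} : Finset (V × V)) = s ×ˢ sᶜ ∪ sᶜ ×ˢ s := by
    ext p
    rw [mem_filter_univ]
    simp only [mem_union, mem_product, mem_compl, Xor]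
    tauto
  rw [hunion, card_union_of_disjoint hdisj, card_product, card_product]
  ring

theorem sum_range_add_mul_sub (x y : ℚ) (n : ℕ) :
    ∑ k ∈ range n, (x + k) * (y - k) =
      n * (x * y) + (y - x) * (n * (n - 1) / 2) - n * (n - 1) * (2 * n - 1) / 6 := by
  induction n with
  | zero => simp
  | succ n ih =>
    rw [sum_range_succ, ih]
    push_cast
    ring

/-- A family of vertex sets `side i`, indexed by the edges `edge i` of `G`, such that `edge i` is
the only edge with exactly one end in `side i`. If `G` is connected, distances then count the sides
that separate two vertices. -/
structure IsEdgeCutSystem {V ι : Type*} (G : SimpleGraph V) (edge : ι → Sym2 V)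
    (side : ι → Finset V) : Prop where
  exists_edge_eq : ∀ ⦃x y⦄, G.Adj x y → ∃ i, edge i = s(x, y)
  xor_mem_iff : ∀ ⦃i x y⦄, edge i = s(x, y) → ∀ j, Xor (x ∈ side j) (y ∈ side j) ↔ i = j

namespace IsEdgeCutSystem

variable {V ι : Type*} {G : SimpleGraph V} {edge : ι → Sym2 V} {side : ι → Finset V}

theorem edge_injective (h : IsEdgeCutSystem G edge side) : Function.Injective edge := by
  intro i j hij
  obtain ⟨x, y, hxy⟩ := Sym2.exists.1 ⟨edge i, rfl⟩
  exact (h.xor_mem_iff hxy j).1 ((h.xor_mem_iff (hij.symm.trans hxy) j).2 rfl)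

theorem xor_mem_iff_mem_edges (h : IsEdgeCutSystem G edge side) {u v : V} {p : G.Walk u v}
    (hp : p.IsTrail) (j : ι) : Xor (u ∈ side j) (v ∈ side j) ↔ edge j ∈ p.edges := by
  induction p with
  | nil => simp
  | @cons u w v huw p ih =>
    obtain ⟨hp, hnotMem⟩ := (Walk.isTrail_cons huw p).1 hp
    obtain ⟨i, hi⟩ := h.exists_edge_eq huw
    have hfirst : Xor (u ∈ side j) (w ∈ side j) ↔ edge j = s(u, w) := by
      rw [h.xor_mem_iff hi, ← hi, h.edge_injective.eq_iff, eq_comm]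
    have hrest : edge j = s(u, w) → edge j ∉ p.edges := fun hj => hj ▸ hnotMem
    rw [Walk.edges_cons, List.mem_cons, ← hfirst, ← ih hp]
    rw [← hfirst, ← ih hp] at hrest
    simp only [Xor] at hrest ⊢
    tauto

variable [DecidableEq V] [Fintype ι]

theorem card_filter_xor_mem_eq_length (h : IsEdgeCutSystem G edge side) {u v : V} {p : G.Walk u v}
    (hp : p.IsTrail) : #{j | Xor (u ∈ side j) (v ∈ side j)} = p.length := by
  have himage : ({j | Xor (u ∈ side j) (v ∈ side j)} : Finset ι).image edge
      = p.edges.toFinset := by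
    ext e
    induction e with | _ x y
    simp only [mem_image, mem_filter_univ, h.xor_mem_iff_mem_edges hp, List.mem_toFinset]
    refine ⟨fun ⟨_, hj, hjxy⟩ => hjxy ▸ hj, fun hxy => ?_⟩
    obtain ⟨j, hj⟩ := h.exists_edge_eq (p.adj_of_mem_edges hxy)
    exact ⟨j, hj ▸ hxy, hj⟩
  rw [← card_image_of_injective _ h.edge_injective, himage,
    List.toFinset_card_of_nodup hp.edges_nodup, Walk.length_edges]

theorem dist_eq_card (h : IsEdgeCutSystem G edge side) (hG : G.Connected) (u v : V) :
    G.dist u v = #{j | Xor (u ∈ side j) (v ∈ side j)} := by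
  obtain ⟨p, hp⟩ := hG.exists_walk_length_eq_dist u v
  rw [h.card_filter_xor_mem_eq_length (p.isPath_of_length_eq_dist hp).isTrail, hp]

theorem wienerIndex_eq [Fintype V] (h : IsEdgeCutSystem G edge side) (hG : G.Connected) :
    wienerIndex G = ∑ j, (#(side j) : ℚ) * #(side j)ᶜ := by
  have hcount : ∑ u, ∑ v, G.dist u v = ∑ j, 2 * (#(side j) * #(side j)ᶜ) := by
    simp only [h.dist_eq_card hG, ← card_filter_xor_mem]
    rw [← Fintype.sum_prod_type']
    exact sum_card_bipartiteAbove_eq_sum_card_bipartiteBelow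
      fun (p : V × V) j => Xor (p.1 ∈ side j) (p.2 ∈ side j)
  rw [wienerIndex, div_eq_iff two_ne_zero, sum_mul]
  exact_mod_cast hcount.trans (sum_congr rfl fun _ _ => mul_comm _ _)

end IsEdgeCutSystem

theorem card_filter_edgeFinset_subset_connectedComponent {V : Type*} [Fintype V] [DecidableEq V]
    {G : SimpleGraph V} [DecidableRel G.Adj] (hG : G.IsAcyclic) (c : G.ConnectedComponent)
    {s : Finset V} (hs : c.supp = s) : #{e ∈ G.edgeFinset | e.toFinset ⊆ s} + 1 = #s := by
  have htree : (G.induce (s : Set V)).IsTree := hs ▸ hG.isTree_connectedComponent c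
  rw [card_filter_edgeFinset_toFinset_subset, htree.card_edgeFinset]
  simp

section InfSide

variable {V : Type*} [LinearOrder V] {T : SimpleGraph V}

theorem sym2_mk_inf_sup (e : Sym2 V) : s(e.inf, e.sup) = e :=
  Sym2.sortEquiv.left_inv e

variable [Fintype V]

open Classical in
/-- The vertices on the same side of the edge `e` as its smaller end: the component of `e.inf` in
`T - e`. -/
noncomputable def infSide (T : SimpleGraph V) (e : T.edgeSet) : Finset V :=
  {v | (T.deleteEdges {e.1}).Reachable v e.1.inf}

theorem mem_infSide {e : T.edgeSet} {v : V} :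
    v ∈ infSide T e ↔ (T.deleteEdges {e.1}).Reachable v e.1.inf := by
  simp [infSide]

theorem inf_mem_infSide (e : T.edgeSet) : e.1.inf ∈ infSide T e :=
  mem_infSide.2 .rfl

theorem sup_notMem_infSide (hT : T.IsAcyclic) (e : T.edgeSet) : e.1.sup ∉ infSide T e := by
  have hbridge : T.IsBridge s(e.1.inf, e.1.sup) :=
    isAcyclic_iff_forall_isBridge.1 hT (by simp [sym2_mk_inf_sup])
  rw [isBridge_iff, sym2_mk_inf_sup] at hbridge
  exact fun h => hbridge (mem_infSide.1 h).symm

theorem mem_infSide_iff_of_adj {e : T.edgeSet} {x y : V} (hxy : T.Adj x y) (hne : s(x, y) ≠ e.1) :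
    x ∈ infSide T e ↔ y ∈ infSide T e := by
  have hadj : (T.deleteEdges {e.1}).Adj x y := deleteEdges_adj.2 ⟨hxy, hne⟩
  rw [mem_infSide, mem_infSide]
  exact ⟨hadj.symm.reachable.trans, hadj.reachable.trans⟩

theorem inf_mem_infSide_iff_sup_mem {e f : T.edgeSet} (hne : f ≠ e) :
    f.1.inf ∈ infSide T e ↔ f.1.sup ∈ infSide T e := by
  refine mem_infSide_iff_of_adj ?_ ?_
  · rw [← mem_edgeSet, sym2_mk_inf_sup]
    exact f.2
  · rw [sym2_mk_inf_sup]
    exact Subtype.coe_ne_coe.2 hne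

theorem toFinset_subset_infSide_iff {e f : T.edgeSet} (hne : f ≠ e) :
    f.1.toFinset ⊆ infSide T e ↔ f.1.inf ∈ infSide T e := by
  rw [← sym2_mk_inf_sup f.1, Sym2.toFinset_mk_eq, insert_subset_iff, singleton_subset_iff,
    sym2_mk_inf_sup, ← inf_mem_infSide_iff_sup_mem hne, and_self]

theorem isEdgeCutSystem_infSide (hT : T.IsAcyclic) :
    IsEdgeCutSystem T Subtype.val (infSide T) where
  exists_edge_eq x y hxy := ⟨⟨s(x, y), hxy⟩, rfl⟩
  xor_mem_iff f x y hf e := by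
    have hends : Xor (x ∈ infSide T e) (y ∈ infSide T e) ↔
        Xor (f.1.inf ∈ infSide T e) (f.1.sup ∈ infSide T e) := by
      rw [← sym2_mk_inf_sup f.1, Sym2.eq_iff] at hf
      obtain ⟨rfl, rfl⟩ | ⟨rfl, rfl⟩ := hf
      · rfl
      · rw [xor_comm]
    rw [hends]
    by_cases hfe : f = e
    · subst hfe
      simp [inf_mem_infSide, sup_notMem_infSide hT]
    · simp [inf_mem_infSide_iff_sup_mem hfe, hfe]

theorem card_filter_inf_mem_infSide [Fintype T.edgeSet] (hT : T.IsAcyclic) (e : T.edgeSet) :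
    #{f : T.edgeSet | f ≠ e ∧ f.1.inf ∈ infSide T e} + 1 = #(infSide T e) := by
  classical
  have hsupp : ((T.deleteEdges {e.1}).connectedComponentMk e.1.inf).supp = infSide T e := by
    ext v
    simp [mem_infSide]
  rw [← card_filter_edgeFinset_subset_connectedComponent (hT.anti (deleteEdges_le _)) _ hsupp,
    ← card_map (Function.Embedding.subtype _)]
  congr 2
  ext f
  simp only [mem_map, mem_filter, mem_univ, true_and, mem_edgeFinset, edgeSet_deleteEdges,
    Set.mem_sdiff, Set.mem_singleton_iff, Function.Embedding.subtype_apply]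
  constructor
  · rintro ⟨f, ⟨hne, hf⟩, rfl⟩
    exact ⟨⟨f.2, Subtype.coe_ne_coe.2 hne⟩, (toFinset_subset_infSide_iff hne).2 hf⟩
  · rintro ⟨⟨hf, hne⟩, hsub⟩
    have hne' : (⟨f, hf⟩ : T.edgeSet) ≠ e := fun h => hne (congrArg Subtype.val h)
    exact ⟨⟨f, hf⟩, ⟨hne', (toFinset_subset_infSide_iff hne').1 hsub⟩, rfl⟩

end InfSide

section Subdivision

variable {V : Type*} [LinearOrder V] {T : SimpleGraph V} {m : ℕ}

/-- The `k`-th vertex on the path of `mSubdivision T m` that replaces the edge `e`, counted from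
`e.inf` (`k = 0`) to `e.sup` (`k = m + 1`, and by convention every larger `k`). -/
def pathVertex (m : ℕ) (e : T.edgeSet) : ℕ → V ⊕ (T.edgeSet × Fin m)
  | 0 => .inl e.1.inf
  | k + 1 => if hk : k < m then .inr (e, ⟨k, hk⟩) else .inl e.1.sup

theorem pathVertex_succ_of_lt (e : T.edgeSet) {k : ℕ} (hk : k < m) :
    pathVertex m e (k + 1) = .inr (e, ⟨k, hk⟩) :=
  dif_pos hk

theorem pathVertex_last (e : T.edgeSet) : pathVertex m e (m + 1) = .inl e.1.sup :=
  dif_neg (lt_irrefl m)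

theorem adj_pathVertex_succ (hm : 1 ≤ m) (e : T.edgeSet) {k : ℕ} (hk : k ≤ m) :
    (mSubdivision T m).Adj (pathVertex m e k) (pathVertex m e (k + 1)) := by
  rw [mSubdivision, fromRel_adj]
  cases k with
  | zero => simp [pathVertex, show 0 < m from hm]
  | succ k =>
    rw [pathVertex_succ_of_lt e hk]
    obtain hlt | rfl := Nat.lt_or_eq_of_le hk
    · simp [pathVertex_succ_of_lt e hlt]
    · simp [pathVertex_last]

theorem exists_pathVertex_eq_of_adj {x y : V ⊕ (T.edgeSet × Fin m)}
    (h : (mSubdivision T m).Adj x y) :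
    ∃ e : T.edgeSet, ∃ k ≤ m, s(pathVertex m e k, pathVertex m e (k + 1)) = s(x, y) := by
  rw [mSubdivision, fromRel_adj] at h
  wlog hrel : _ generalizing x y
  · obtain ⟨e, k, hk, heq⟩ := this ⟨h.1.symm, h.2.symm⟩ (h.2.resolve_left hrel)
    exact ⟨e, k, hk, heq.trans Sym2.eq_swap⟩
  obtain u | ⟨e, i⟩ := x <;> obtain v | ⟨f, j⟩ := y
  · exact hrel.elim
  · obtain ⟨hj, rfl⟩ | ⟨hj, rfl⟩ := hrel
    · refine ⟨f, 0, by lia, ?_⟩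
      rw [pathVertex_succ_of_lt f (by lia)]
      simp [pathVertex, Fin.ext_iff, hj]
    · refine ⟨f, m, le_rfl, ?_⟩
      obtain ⟨n, rfl⟩ := Nat.exists_eq_succ_of_ne_zero j.pos.ne'
      rw [pathVertex_last, pathVertex_succ_of_lt f (by lia), Sym2.eq_swap]
      simp [Fin.ext_iff, hj]
  · exact hrel.elim
  · obtain ⟨rfl, hij⟩ := hrel
    refine ⟨e, i + 1, by lia, ?_⟩
    rw [pathVertex_succ_of_lt e i.2, pathVertex_succ_of_lt e (by lia)]
    simp [hij]

theorem reachable_pathVertex (hm : 1 ≤ m) (e : T.edgeSet) {k : ℕ} (hk : k ≤ m + 1) :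
    (mSubdivision T m).Reachable (.inl e.1.inf) (pathVertex m e k) := by
  induction k with
  | zero => rfl
  | succ k ih => exact (ih (by lia)).trans (adj_pathVertex_succ hm e (by lia)).reachable

theorem reachable_inl_of_adj (hm : 1 ≤ m) {u v : V} (huv : T.Adj u v) :
    (mSubdivision T m).Reachable (.inl u) (.inl v) := by
  have hends := reachable_pathVertex hm ⟨s(u, v), huv⟩ le_rfl
  rw [pathVertex_last] at hends
  obtain h | h := le_total u v
  · simpa [h] using hends
  · simpa [h] using hends.symm

theorem connected_mSubdivision (hm : 1 ≤ m) (hT : T.Connected) :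
    (mSubdivision T m).Connected := by
  have hinl (u v : V) : (mSubdivision T m).Reachable (.inl u) (.inl v) := by
    obtain ⟨p⟩ := hT.preconnected u v
    induction p with
    | nil => rfl
    | cons h _ ih => exact (reachable_inl_of_adj hm h).trans ih
  obtain ⟨r⟩ := hT.nonempty
  refine connected_iff_exists_forall_reachable _ |>.2 ⟨.inl r, ?_⟩
  rintro (v | ⟨e, i⟩)
  · exact hinl r v
  · rw [← pathVertex_succ_of_lt e i.2]
    exact (hinl r _).trans (reachable_pathVertex hm e (by lia))

variable [Fintype V] [Fintype T.edgeSet]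

/-- The vertices of `mSubdivision T m` on the same side as `e.inf` of the edge joining the `k`-th
to the `k + 1`-st vertex of the path that replaces `e`. -/
noncomputable def subdivisionSide (m : ℕ) (e : T.edgeSet) (k : ℕ) :
    Finset (V ⊕ (T.edgeSet × Fin m)) :=
  (infSide T e).disjSum
    (({e} : Finset _) ×ˢ ({i | i.val < k} : Finset (Fin m)) ∪
      ({f | f ≠ e ∧ f.1.inf ∈ infSide T e} : Finset T.edgeSet) ×ˢ univ)

theorem inr_mem_subdivisionSide {e f : T.edgeSet} {k : ℕ} {i : Fin m} :
    .inr (f, i) ∈ subdivisionSide m e k ↔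
      f = e ∧ i.val < k ∨ f ≠ e ∧ f.1.inf ∈ infSide T e := by
  simp [subdivisionSide, and_comm, eq_comm]

theorem inl_mem_subdivisionSide {e : T.edgeSet} {k : ℕ} {v : V} :
    .inl v ∈ subdivisionSide m e k ↔ v ∈ infSide T e := by
  simp [subdivisionSide]

theorem pathVertex_mem_subdivisionSide_self (hT : T.IsAcyclic) (e : T.edgeSet) {j k : ℕ}
    (hk : k ≤ m) : pathVertex m e j ∈ subdivisionSide m e k ↔ j ≤ k := by
  cases j with
  | zero => simp [pathVertex, inl_mem_subdivisionSide, inf_mem_infSide]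
  | succ j =>
    by_cases hj : j < m
    · simp [pathVertex, hj, inr_mem_subdivisionSide]
    · simp only [pathVertex, hj, dite_false, inl_mem_subdivisionSide, sup_notMem_infSide hT,
        false_iff]
      lia

theorem pathVertex_mem_subdivisionSide_of_ne {e f : T.edgeSet} (hne : f ≠ e) (j k : ℕ) :
    pathVertex m f j ∈ subdivisionSide m e k ↔ f.1.inf ∈ infSide T e := by
  cases j with
  | zero => simp [pathVertex, inl_mem_subdivisionSide]
  | succ j =>
    by_cases hj : j < m
    · simp [pathVertex, hj, inr_mem_subdivisionSide, hne]
    · simp [pathVertex, hj, inl_mem_subdivisionSide, inf_mem_infSide_iff_sup_mem hne]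

theorem isEdgeCutSystem_subdivisionSide (hT : T.IsAcyclic) :
    IsEdgeCutSystem (mSubdivision T m)
      (fun p : T.edgeSet × Fin (m + 1) => s(pathVertex m p.1 p.2, pathVertex m p.1 (p.2 + 1)))
      (fun p => subdivisionSide m p.1 p.2) where
  exists_edge_eq x y hxy := by
    obtain ⟨e, k, hk, h⟩ := exists_pathVertex_eq_of_adj hxy
    exact ⟨(e, ⟨k, Nat.lt_succ_of_le hk⟩), h⟩
  xor_mem_iff := by
    rintro ⟨f, j⟩ x y hxy ⟨e, k⟩
    have hends : Xor (x ∈ subdivisionSide m e k) (y ∈ subdivisionSide m e k) ↔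
        Xor (pathVertex m f j ∈ subdivisionSide m e k)
          (pathVertex m f (j + 1) ∈ subdivisionSide m e k) := by
      obtain ⟨rfl, rfl⟩ | ⟨rfl, rfl⟩ := Sym2.eq_iff.1 hxy
      · rfl
      · rw [xor_comm]
    rw [hends, Prod.mk.injEq]
    by_cases hfe : f = e
    · subst hfe
      simp only [pathVertex_mem_subdivisionSide_self hT f k.is_le, Xor, Fin.ext_iff]
      lia
    · simp [pathVertex_mem_subdivisionSide_of_ne hfe, hfe]

theorem card_subdivisionSide (hT : T.IsAcyclic) (e : T.edgeSet) {k : ℕ} (hk : k ≤ m) :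
    #(subdivisionSide m e k) + m = (m + 1) * #(infSide T e) + k := by
  have hdisj : Disjoint (({e} : Finset T.edgeSet) ×ˢ ({i | i.val < k} : Finset (Fin m)))
      (({f | f ≠ e ∧ f.1.inf ∈ infSide T e} : Finset T.edgeSet) ×ˢ univ) :=
    disjoint_product.2 (.inl (by simp))
  rw [subdivisionSide, card_disjSum, card_union_of_disjoint hdisj, card_product, card_product,
    card_singleton, card_fin, Fin.card_filter_val_lt, min_eq_right hk,
    ← card_filter_inf_mem_infSide hT e]
  ring

theorem card_compl_subdivisionSide (hT : T.IsTree) (e : T.edgeSet) {k : ℕ} (hk : k ≤ m) :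
    #(subdivisionSide m e k)ᶜ + k = (m + 1) * #(infSide T e)ᶜ := by
  have hedges : Fintype.card T.edgeSet + 1 = Fintype.card V := by
    rw [← edgeFinset_card, hT.card_edgeFinset]
  have hside := card_subdivisionSide hT.isAcyclic e hk
  have hvertices := card_add_card_compl (infSide T e)
  have htotal := card_add_card_compl (subdivisionSide m e k)
  rw [Fintype.card_sum, Fintype.card_prod, Fintype.card_fin] at htotal
  rw [← hedges] at hvertices htotal
  zify at hside hvertices htotal ⊢
  linear_combination htotal - hside - (m + 1) * hvertices

theorem sum_card_subdivisionSide_mul_card_compl (hT : T.IsTree) (e : T.edgeSet) :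
    ∑ k : Fin (m + 1), (#(subdivisionSide m e k) : ℚ) * #(subdivisionSide m e k)ᶜ =
      (m + 1) ^ 3 * (#(infSide T e) * #(infSide T e)ᶜ)
        - m * (m + 1) ^ 2 * Fintype.card V / 2 + m * (m ^ 2 - 1) / 6 := by
  have hterm (k : Fin (m + 1)) :
      (#(subdivisionSide m e k) : ℚ) * #(subdivisionSide m e k)ᶜ =
        ((m + 1) * #(infSide T e) - m + k.val) * ((m + 1) * #(infSide T e)ᶜ - k.val) := by
    congr 1
    · rw [sub_add_eq_add_sub, eq_sub_iff_add_eq]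
      exact_mod_cast card_subdivisionSide hT.isAcyclic e k.is_le
    · rw [eq_sub_iff_add_eq]
      exact_mod_cast card_compl_subdivisionSide hT e k.is_le
  rw [← card_add_card_compl (infSide T e), sum_congr rfl fun k _ => hterm k,
    Fin.sum_univ_eq_sum_range
      fun k => ((m + 1) * (#(infSide T e) : ℚ) - m + k) * ((m + 1) * #(infSide T e)ᶜ - k),
    sum_range_add_mul_sub]
  push_cast
  ring

end Subdivision

theorem wiener_mSubdivision {V : Type*} [Fintype V] [LinearOrder V] [Nonempty V]
    (T : SimpleGraph V) [DecidableRel T.Adj] (hT : T.IsTree)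
    (m : ℕ) (hm : 1 ≤ m) :
    wienerIndex (mSubdivision T m) =
      ((m : ℚ) + 1) ^ 3 * wienerIndex T
        - (m : ℚ) * ((m : ℚ) + 1) ^ 2 * (Fintype.card V : ℚ) ^ 2 / 2
        + (m : ℚ) * ((m : ℚ) + 1) * (2 * (m : ℚ) + 1) * (Fintype.card V : ℚ) / 3
        - (m : ℚ) * ((m : ℚ) ^ 2 - 1) / 6 := by
  have hedges : (Fintype.card T.edgeSet : ℚ) = Fintype.card V - 1 := by
    rw [eq_sub_iff_add_eq, ← edgeFinset_card]
    exact_mod_cast hT.card_edgeFinset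
  rw [(isEdgeCutSystem_subdivisionSide hT.isAcyclic).wienerIndex_eq
      (connected_mSubdivision hm hT.connected),
    (isEdgeCutSystem_infSide hT.isAcyclic).wienerIndex_eq hT.connected, Fintype.sum_prod_type]
  simp only [sum_card_subdivisionSide_mul_card_compl hT, sum_add_distrib, sum_sub_distrib,
    ← mul_sum, sum_const, card_univ, nsmul_eq_mul, hedges]
  ring
end

section
/- Let T be a tree on a finite nonempty vertex type V with n = |V| vertices, and let m be an integer such that every vertex of T has degree at most m. Let G be the m-order Type-III growth graph of T. Then the Wiener index of G satisfies W(G) = (m−1)^2·W(T) + (m−1)^2·n^2 + 2(m−1)·n + 1. -/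
/-- The `m`-order Type-III growth graph of `T`: attach `m - deg_T u` new pendant
leaves to every vertex `u` of `T`, so that every original vertex has degree `m`. -/
def typeIIIGrowth {V : Type*} [Fintype V] (T : SimpleGraph V) [DecidableRel T.Adj] (m : ℕ) :
    SimpleGraph (V ⊕ (Σ v : V, Fin (m - T.degree v))) :=
  SimpleGraph.fromRel (fun x y =>
    match x, y with
    | Sum.inl u, Sum.inl v => T.Adj u v
    | Sum.inl u, Sum.inr p => u = p.1
    | _, _ => False)

/-!
Attach `k v` leaves to every vertex `v` of a connected graph with `n` vertices, and let `L = ∑ k v`.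
Distances between roots are unchanged and every leaf adds `1`, so the Wiener index of the new graph
is `(∑ u, ∑ v, (k u + 1) * (k v + 1) * dist u v) / 2 + L * (n + L - 1)`.

For the growth graph, `k v + 1 = (m - 1) + τ v` with `τ v = 2 - degree v`. On a tree, every vertex
`v ≠ u` has exactly one neighbour nearer to `u`, so the Laplacian maps `dist u` to `τ - 2 δ_u`.
Its quadratic form at `dist u` is the number `n - 1` of edges, since distances change by `±1` along
each edge; pairing with `dist u`, which vanishes at `u`, gives `∑ v, τ v * dist u v = n - 1`. This
evaluates every part of the weighted sum that involves `τ`.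
-/

open Finset SimpleGraph

section Tree

variable {V R : Type*} {T : SimpleGraph V}

theorem existsUnique_adj_dist_eq_add_one (hT : T.IsTree) {u v : V} (huv : v ≠ u) :
    ∃! w, T.Adj v w ∧ T.dist u v = T.dist u w + 1 := by
  obtain ⟨p, hp⟩ := hT.connected.exists_walk_length_eq_dist v u
  cases p with
  | nil => exact absurd rfl huv
  | @cons _ w _ hvw q =>
    have hw : T.dist u v = T.dist u w + 1 := by
      have hq := dist_le q
      rw [T.dist_comm] at hq
      have hlength : q.length + 1 = T.dist u v := hp.trans T.dist_comm
      have := hT.dist_eq_dist_add_one_of_adj u hvw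
      omega
    refine ⟨w, ⟨hvw, hw⟩, fun w' ⟨hvw', hw'⟩ ↦ ?_⟩
    obtain ⟨q', hq'⟩ := hT.connected.exists_walk_length_eq_dist w' u
    have hlength : (Walk.cons hvw' q').length = T.dist v u := by
      rw [Walk.length_cons, hq', T.dist_comm (u := w'), T.dist_comm (u := v), hw']
    have hpath := Walk.isPath_of_length_eq_dist _ hlength
    have heq := (hT.existsUnique_path v u).unique hpath (Walk.isPath_of_length_eq_dist _ hp)
    simpa using congrArg Walk.snd heq

variable [Fintype V] [DecidableRel T.Adj]

theorem sum_two_sub_degree [Ring R] (hT : T.IsTree) : ∑ v, (2 - T.degree v : R) = 2 := by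
  have hdeg : ∑ v, (T.degree v : R) = 2 * #T.edgeFinset :=
    mod_cast congrArg (Nat.cast (R := R)) T.sum_degrees_eq_twice_card_edges
  rw [sum_sub_distrib, hdeg, sum_const, card_univ, ← hT.card_edgeFinset, nsmul_eq_mul',
    Nat.cast_succ, mul_add_one, add_sub_cancel_left]

theorem lapMatrix_mulVec_dist [DecidableEq V] [Ring R] (hT : T.IsTree) (u v : V) :
    (T.lapMatrix R).mulVec (fun w ↦ (T.dist u w : R)) v =
      2 - T.degree v - if v = u then 2 else 0 := by
  rw [lapMatrix_mulVec_apply]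
  split_ifs with huv
  · subst huv
    have hone : ∀ w ∈ T.neighborFinset v, (T.dist v w : R) = 1 := fun w hw ↦ by
      rw [dist_eq_one_iff_adj.2 ((T.mem_neighborFinset v w).1 hw), Nat.cast_one]
    simp [sum_congr rfl hone]
  · obtain ⟨p, ⟨hvp, hp⟩, hunique⟩ := existsUnique_adj_dist_eq_add_one hT huv
    have hstep : ∀ w ∈ T.neighborFinset v,
        (T.dist u w : R) = T.dist u v + 1 - if w = p then 2 else 0 := fun w hw ↦ by
      have hvw : T.Adj v w := (T.mem_neighborFinset v w).1 hw
      split_ifs with hwp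
      · rw [hwp, hp, Nat.cast_succ, add_assoc, one_add_one_eq_two, add_sub_cancel_right]
      · have hfar := (hT.dist_eq_dist_add_one_of_adj u hvw).resolve_left
          fun h ↦ hwp (hunique w ⟨hvw, h⟩)
        rw [hfar, Nat.cast_succ, sub_zero]
    rw [sum_congr rfl hstep, sum_sub_distrib, sum_ite_eq',
      if_pos ((T.mem_neighborFinset v p).2 hvp), sum_const, card_neighborFinset_eq_degree,
      nsmul_eq_mul]
    noncomm_ring

theorem dist_dotProduct_lapMatrix_mulVec_dist [DecidableEq V] [Field R] [CharZero R]
    (hT : T.IsTree) (u : V) :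
    (fun v ↦ (T.dist u v : R)) ⬝ᵥ (T.lapMatrix R).mulVec (fun v ↦ (T.dist u v : R)) =
      Fintype.card V - 1 := by
  have hedge (v w : V) :
      (if T.Adj v w then ((T.dist u v : R) - T.dist u w) ^ 2 else 0) =
        if T.Adj v w then 1 else 0 := by
    split_ifs with hvw
    · rcases hT.dist_eq_dist_add_one_of_adj u hvw with h | h <;> simp [h]
    · rfl
  rw [← Matrix.toLinearMap₂'_apply', lapMatrix_toLinearMap₂']
  simp_rw [hedge, ← degree_eq_sum_if_adj]
  have hsum := sum_two_sub_degree (R := R) hT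
  rw [sum_sub_distrib, sum_const, card_univ, nsmul_eq_mul] at hsum
  linear_combination (-1 / 2) * hsum

theorem sum_two_sub_degree_mul_dist [Field R] [CharZero R] (hT : T.IsTree) (u : V) :
    ∑ v, (2 - T.degree v : R) * T.dist u v = Fintype.card V - 1 := by
  classical
  rw [← dist_dotProduct_lapMatrix_mulVec_dist hT u, dotProduct]
  refine sum_congr rfl fun v _ ↦ ?_
  rw [lapMatrix_mulVec_dist hT]
  split_ifs with huv
  · simp [huv]
  · ring

theorem sum_sum_add_two_sub_degree_mul_dist [Field R] [CharZero R] (hT : T.IsTree) (c : R) :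
    ∑ u, ∑ v, (c + (2 - T.degree u)) * (c + (2 - T.degree v)) * (T.dist u v : R) =
      c ^ 2 * ∑ u, ∑ v, (T.dist u v : R) +
        2 * (Fintype.card V - 1) * (c * Fintype.card V + 1) := by
  set n : R := (Fintype.card V : R) with hn
  have hinner (u : V) : ∑ v, (c + (2 - T.degree v)) * (T.dist u v : R) =
      c * ∑ v, (T.dist u v : R) + (n - 1) := by
    simp_rw [add_mul, sum_add_distrib, ← mul_sum, sum_two_sub_degree_mul_dist hT, hn]
  have houter : ∑ u, (2 - T.degree u : R) * ∑ v, (T.dist u v : R) = n * (n - 1) := by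
    simp_rw [mul_sum]
    rw [sum_comm]
    simp_rw [T.dist_comm, sum_two_sub_degree_mul_dist hT, sum_const, card_univ, nsmul_eq_mul, hn]
  calc
    _ = ∑ u, (c + (2 - T.degree u)) * (c * ∑ v, (T.dist u v : R) + (n - 1)) := by
      simp_rw [mul_assoc, ← mul_sum, hinner]
    _ = c ^ 2 * ∑ u, ∑ v, (T.dist u v : R) +
          c * ∑ u, (2 - T.degree u : R) * ∑ v, (T.dist u v : R) +
          (n - 1) * (c * n + ∑ u, (2 - T.degree u : R)) := by
      simp_rw [add_mul, mul_add, sum_add_distrib, ← sum_mul, mul_left_comm _ c, ← mul_sum,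
        sum_const, card_univ, nsmul_eq_mul, ← hn]
      ring
    _ = _ := by
      rw [houter, sum_two_sub_degree hT]
      ring

end Tree

/-- The graph obtained from `G` by attaching to every vertex `v` the elements of `ι v` as
pendant leaves. -/
def attachLeaves {V : Type*} (G : SimpleGraph V) (ι : V → Type*) :
    SimpleGraph (V ⊕ Σ v, ι v) where
  Adj
    | .inl u, .inl v => G.Adj u v
    | .inl u, .inr p => u = p.1
    | .inr p, .inl u => u = p.1
    | .inr _, .inr _ => False
  symm := ⟨by
    rintro (u | p) (v | q) h
    exacts [G.adj_symm h, h, h, h]⟩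
  loopless := ⟨by
    rintro (u | p) h
    exacts [G.loopless.irrefl u h, h]⟩

namespace attachLeaves

variable {V : Type*} {G : SimpleGraph V} {ι : V → Type*}

/-- The vertex of the original graph that carries `x`: an original vertex carries itself. -/
def root : V ⊕ (Σ v, ι v) → V := Sum.elim id Sigma.fst

/-- The distance from `x` to its root, that is, `0` on original vertices and `1` on leaves. -/
def height : V ⊕ (Σ v, ι v) → ℕ := Sum.elim 0 1

theorem dist_root_add_height_of_adj {x y : V ⊕ Σ v, ι v} (h : (attachLeaves G ι).Adj x y) :
    G.dist (root x) (root y) + height x + height y = 1 := by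
  match x, y with
  | .inl u, .inl v => exact dist_eq_one_iff_adj.2 h
  | .inl u, .inr p => simp [root, height, show u = p.1 from h]
  | .inr p, .inl u => simp [root, height, show u = p.1 from h]

theorem dist_root_add_height_le_length (hG : G.Connected) {x y : V ⊕ Σ v, ι v}
    (p : (attachLeaves G ι).Walk x y) (hxy : x ≠ y) :
    G.dist (root x) (root y) + height x + height y ≤ p.length := by
  induction p with
  | nil => exact absurd rfl hxy
  | @cons x z y h q ih =>
    have hstep := dist_root_add_height_of_adj h
    rw [Walk.length_cons]
    obtain rfl | hzy := eq_or_ne z y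
    · omega
    · have htail := ih hzy
      have htriangle := hG.dist_triangle (u := root x) (v := root z) (w := root y)
      omega

theorem exists_walk_root_length_eq (x : V ⊕ Σ v, ι v) :
    ∃ p : (attachLeaves G ι).Walk x (.inl (root x)), p.length = height x :=
  match x with
  | .inl _ => ⟨.nil, rfl⟩
  | .inr p => ⟨Adj.toWalk (show (attachLeaves G ι).Adj (.inr p) (.inl p.1) from rfl), rfl⟩

theorem exists_walk_length_eq (hG : G.Connected) (x y : V ⊕ Σ v, ι v) :
    ∃ p : (attachLeaves G ι).Walk x y,
      p.length = G.dist (root x) (root y) + height x + height y := by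
  let incl : G →g attachLeaves G ι := ⟨.inl, id⟩
  obtain ⟨p, hp⟩ := exists_walk_root_length_eq (G := G) x
  obtain ⟨q, hq⟩ := exists_walk_root_length_eq (G := G) y
  obtain ⟨r, hr⟩ := hG.exists_walk_length_eq_dist (root x) (root y)
  refine ⟨(p.append (r.map incl)).append q.reverse, ?_⟩
  simp only [Walk.length_append, Walk.length_map, Walk.length_reverse]
  omega

theorem dist_eq_of_ne (hG : G.Connected) {x y : V ⊕ Σ v, ι v} (hxy : x ≠ y) :
    (attachLeaves G ι).dist x y = G.dist (root x) (root y) + height x + height y := by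
  obtain ⟨p, hp⟩ := exists_walk_length_eq hG x y
  obtain ⟨q, hq⟩ := p.reachable.exists_walk_length_eq_dist
  exact le_antisymm (hp ▸ dist_le p) (hq ▸ dist_root_add_height_le_length hG q hxy)

variable [Fintype V] [∀ v, Fintype (ι v)]

theorem sum_root {R : Type*} [NonAssocSemiring R] (f : V → R) :
    ∑ x : V ⊕ Σ v, ι v, f (root x) = ∑ v, (Fintype.card (ι v) + 1) * f v := by
  simp [root, Fintype.sum_sum_type, Fintype.sum_sigma, add_mul, sum_add_distrib, add_comm]

theorem sum_height : ∑ x : V ⊕ Σ v, ι v, height x = Fintype.card (Σ v, ι v) := by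
  simp [height, Fintype.sum_sum_type]

theorem wienerIndex_eq (hG : G.Connected) :
    wienerIndex (attachLeaves G ι) =
      (∑ u, ∑ v, (Fintype.card (ι u) + 1) * (Fintype.card (ι v) + 1) * (G.dist u v : ℚ)) / 2 +
        Fintype.card (Σ v, ι v) * (Fintype.card V + Fintype.card (Σ v, ι v) - 1) := by
  classical
  have hdist (x y : V ⊕ Σ v, ι v) : ((attachLeaves G ι).dist x y : ℚ) =
      G.dist (root x) (root y) + height x + height y - if x = y then 2 * (height x : ℚ) else 0 := by
    split_ifs with hxy
    · simp [hxy, two_mul]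
    · simp [dist_eq_of_ne hG hxy]
  have hroots : ∑ x : V ⊕ Σ v, ι v, ∑ y : V ⊕ Σ v, ι v, (G.dist (root x) (root y) : ℚ) =
      ∑ u, ∑ v, (Fintype.card (ι u) + 1) * (Fintype.card (ι v) + 1) * (G.dist u v : ℚ) := by
    simp_rw [fun u ↦ sum_root (ι := ι) fun v ↦ (G.dist u v : ℚ),
      sum_root fun u ↦ ∑ v, (Fintype.card (ι v) + 1) * (G.dist u v : ℚ), mul_sum, mul_assoc]
  have hheight : ∑ x : V ⊕ Σ v, ι v, (height x : ℚ) = Fintype.card (Σ v, ι v) := by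
    exact_mod_cast sum_height
  simp_rw [wienerIndex, hdist, sum_sub_distrib, sum_add_distrib, hroots, sum_ite_eq, sum_const,
    mem_univ, if_true, ← smul_sum, ← mul_sum, hheight, card_univ, Fintype.card_sum, nsmul_eq_mul]
  push_cast
  ring

end attachLeaves

theorem typeIIIGrowth_eq_attachLeaves {V : Type*} [Fintype V] (T : SimpleGraph V)
    [DecidableRel T.Adj] (m : ℕ) :
    typeIIIGrowth T m = attachLeaves T fun v ↦ Fin (m - T.degree v) := by
  ext (u | p) (v | q)
  · simpa [typeIIIGrowth, attachLeaves, T.adj_comm v u] using Adj.ne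
  all_goals simp [typeIIIGrowth, attachLeaves]

theorem wiener_typeIIIGrowth {V : Type*} [Fintype V] [DecidableEq V] [Nonempty V]
    (T : SimpleGraph V) [DecidableRel T.Adj] (hT : T.IsTree)
    (m : ℕ) (hdeg : ∀ v : V, T.degree v ≤ m) :
    wienerIndex (typeIIIGrowth T m) =
      ((m : ℚ) - 1) ^ 2 * wienerIndex T
        + ((m : ℚ) - 1) ^ 2 * (Fintype.card V : ℚ) ^ 2
        + 2 * ((m : ℚ) - 1) * (Fintype.card V : ℚ) + 1 := by
  have hweight (v : V) :
      (Fintype.card (Fin (m - T.degree v)) + 1 : ℚ) = (m - 1) + (2 - T.degree v) := by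
    rw [Fintype.card_fin, Nat.cast_sub (hdeg v)]
    ring
  have hleaves : (Fintype.card (Σ v, Fin (m - T.degree v)) : ℚ) =
      (m - 2) * Fintype.card V + 2 := by
    calc
      _ = ∑ v, ((m - 2 : ℚ) + (2 - T.degree v)) := by
        simp [Nat.cast_sub (hdeg _)]
      _ = _ := by
        rw [sum_add_distrib, sum_two_sub_degree hT, sum_const, card_univ, nsmul_eq_mul, mul_comm]
  rw [typeIIIGrowth_eq_attachLeaves, attachLeaves.wienerIndex_eq hT.connected, hleaves]
  simp_rw [hweight, sum_sum_add_two_sub_degree_mul_dist hT, wienerIndex]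
  ring
end

section
/- Let T be a tree on a finite nonempty vertex type V with n = |V| vertices. Then the sum over all ordered pairs (u,v) of vertices of (deg_T(u) + deg_T(v))·dist_T(u,v) equals 8·W(T) − 2n(n−1); equivalently, the additive degree Wiener index W†(T) = (1/2)·Σ_{u,v} (deg_T(u)+deg_T(v))·dist_T(u,v) equals 4·W(T) − n(n−1). -/
/-!
Root the tree at a vertex `u`. Every edge joins a vertex `v ≠ u` to its parent, the unique neighbour
of `v` closer to `u`, and the distances of the two ends from `u` add up to `2 * dist u v - 1`.
Hence `∑ v, deg v * dist u v`, which counts the distance of each end of each edge once, is the sum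
of `2 * dist u v - 1` over all `v ≠ u`; it remains to sum over all roots `u`.
-/

open Finset

theorem sum_sum_add_mul_of_symmetric {ι R : Type*} [Fintype ι] [NonAssocSemiring R] (f : ι → R)
    {d : ι → ι → R} (hd : ∀ i j, d i j = d j i) :
    ∑ i, ∑ j, (f i + f j) * d i j = 2 * ∑ i, ∑ j, f j * d i j := by
  have swap_indices : ∑ i, ∑ j, f i * d i j = ∑ i, ∑ j, f j * d i j := by
    rw [sum_comm]
    simp_rw [hd]
  simp_rw [add_mul, sum_add_distrib, swap_indices, two_mul]

theorem sum_degree_nsmul_eq_sum_sum_neighborFinset_lt {V : Type*} [Fintype V] (G : SimpleGraph V)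
    [DecidableRel G.Adj] {α M : Type*} [LinearOrder α] [AddCommMonoid M]
    {r : V → α} (hr : ∀ ⦃v w⦄, G.Adj v w → r v ≠ r w) (f : V → M) :
    ∑ v, G.degree v • f v = ∑ v, ∑ w ∈ G.neighborFinset v with r w < r v, (f v + f w) := by
  have split_neighbors (v : V) : G.degree v • f v =
      ∑ w ∈ G.neighborFinset v with r w < r v, f v +
        ∑ w ∈ G.neighborFinset v with r v < r w, f v := by
    have not_lt_iff : ∀ w ∈ G.neighborFinset v, ¬ r w < r v ↔ r v < r w := fun w hw ↦
      not_lt.trans (hr ((G.mem_neighborFinset v w).1 hw)).le_iff_lt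
    rw [← filter_congr not_lt_iff, sum_filter_add_sum_filter_not, sum_const,
      G.card_neighborFinset_eq_degree]
  have swap_ends : ∑ v, ∑ w ∈ G.neighborFinset v with r v < r w, f v =
      ∑ v, ∑ w ∈ G.neighborFinset v with r w < r v, f w :=
    sum_comm' fun v w ↦ by simp [G.adj_comm]
  simp_rw [split_neighbors, sum_add_distrib, swap_ends]

section CloserNeighbor

variable {V : Type*} {G : SimpleGraph V} {u v w w' : V}

theorem exists_adj_dist_lt_of_dist_ne_zero (h : G.dist u v ≠ 0) :
    ∃ w, G.Adj v w ∧ G.dist u w < G.dist u v := by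
  obtain ⟨p, hp⟩ := G.exists_walk_of_dist_ne_zero h
  have hnil : ¬ p.Nil := fun hnil ↦ h (hp ▸ SimpleGraph.Walk.length_eq_zero_iff.2 hnil)
  refine ⟨p.penultimate, (p.adj_penultimate hnil).symm, ?_⟩
  calc G.dist u p.penultimate ≤ p.dropLast.length := G.dist_le _
    _ < p.length := by have := p.length_dropLast_add_one hnil; lia
    _ = G.dist u v := hp

theorem exists_isPath_penultimate_eq_of_adj_of_dist_lt (hadj : G.Adj v w)
    (hlt : G.dist u w < G.dist u v) : ∃ p : G.Walk u v, p.IsPath ∧ p.penultimate = w := by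
  have hv : G.Reachable u v := .of_dist_ne_zero (Nat.ne_zero_of_lt hlt)
  obtain ⟨p, hp⟩ := (hv.trans hadj.reachable).exists_walk_length_eq_dist
  let q : G.Walk u v := p.concat hadj.symm
  have hq : q.length = G.dist u v :=
    le_antisymm (by rw [p.length_concat, hp]; exact hlt) (G.dist_le q)
  exact ⟨q, q.isPath_of_length_eq_dist hq, p.penultimate_concat _⟩

theorem eq_of_adj_of_dist_lt (hG : G.IsAcyclic) (hw : G.Adj v w) (hlt : G.dist u w < G.dist u v)
    (hw' : G.Adj v w') (hlt' : G.dist u w' < G.dist u v) : w = w' := by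
  obtain ⟨p, hp, rfl⟩ := exists_isPath_penultimate_eq_of_adj_of_dist_lt hw hlt
  obtain ⟨q, hq, rfl⟩ := exists_isPath_penultimate_eq_of_adj_of_dist_lt hw' hlt'
  have hpq : (⟨p, hp⟩ : G.Path u v) = ⟨q, hq⟩ := (hG.subsingleton_path u v).elim _ _
  exact congrArg (·.1.penultimate) hpq

theorem existsUnique_adj_dist_lt (hG : G.IsAcyclic) (hu : G.Reachable u v) (hne : v ≠ u) :
    ∃! w, G.Adj v w ∧ G.dist u w < G.dist u v := by
  obtain ⟨w, hw, hlt⟩ := exists_adj_dist_lt_of_dist_ne_zero (hu.pos_dist_of_ne hne.symm).ne'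
  exact ⟨w, ⟨hw, hlt⟩, fun _ h ↦ eq_of_adj_of_dist_lt hG h.1 h.2 hw hlt⟩

theorem sum_dist_add_dist_closer_neighbor_add_one [Fintype (G.neighborSet v)] (hG : G.IsAcyclic)
    (hu : G.Reachable u v) (hne : v ≠ u) :
    ∑ w ∈ G.neighborFinset v with G.dist u w < G.dist u v, (G.dist u v + G.dist u w) + 1 =
      2 * G.dist u v := by
  obtain ⟨w, ⟨hadj, hlt⟩, huniq⟩ := existsUnique_adj_dist_lt hG hu hne
  have closer_eq : {x ∈ G.neighborFinset v | G.dist u x < G.dist u v} = {w} :=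
    eq_singleton_iff_unique_mem.2 ⟨by simp [hadj, hlt], fun x hx ↦ huniq x (by simpa using hx)⟩
  rw [closer_eq, sum_singleton]
  have := hG.dist_eq_dist_add_one_of_adj_of_reachable u hadj hu
  lia

end CloserNeighbor

theorem sum_degree_mul_dist_add_card {V : Type*} [Fintype V] {T : SimpleGraph V}
    [DecidableRel T.Adj] (hT : T.IsTree) (u : V) :
    ∑ v, T.degree v * T.dist u v + Fintype.card V = 2 * ∑ v, T.dist u v + 1 := by
  classical
  have hparent (v : V) :
      ∑ w ∈ T.neighborFinset v with T.dist u w < T.dist u v, (T.dist u v + T.dist u w) + 1 =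
        2 * T.dist u v + if v = u then 1 else 0 := by
    split_ifs with hv
    · simp [hv]
    · exact sum_dist_add_dist_closer_neighbor_add_one hT.isAcyclic (hT.connected u v) hv
  calc ∑ v, T.degree v * T.dist u v + Fintype.card V
      = ∑ v, ∑ w ∈ T.neighborFinset v with T.dist u w < T.dist u v, (T.dist u v + T.dist u w) +
          Fintype.card V := by
        rw [← sum_degree_nsmul_eq_sum_sum_neighborFinset_lt T fun _ _ ↦ hT.dist_ne_of_adj u]
        simp_rw [smul_eq_mul]
    _ = ∑ v, (∑ w ∈ T.neighborFinset v with T.dist u w < T.dist u v,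
          (T.dist u v + T.dist u w) + 1) := by
        rw [sum_add_distrib, Fintype.card_eq_sum_ones]
    _ = ∑ v, (2 * T.dist u v + if v = u then 1 else 0) := sum_congr rfl fun v _ ↦ hparent v
    _ = 2 * ∑ v, T.dist u v + 1 := by simp [sum_add_distrib, mul_sum]

theorem additive_degree_wiener {V : Type*} [Fintype V] [Nonempty V]
    (T : SimpleGraph V) [DecidableRel T.Adj] (hT : T.IsTree) :
    ∑ u : V, ∑ v : V, ((T.degree u : ℚ) + (T.degree v : ℚ)) * (T.dist u v : ℚ) =
      8 * wienerIndex T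
        - 2 * (Fintype.card V : ℚ) * ((Fintype.card V : ℚ) - 1) := by
  have hsymm : ∑ u, ∑ v, ((T.degree u : ℚ) + T.degree v) * T.dist u v =
      2 * ∑ u, ∑ v, (T.degree v : ℚ) * T.dist u v := by
    refine sum_sum_add_mul_of_symmetric _ fun u v ↦ ?_
    rw [T.dist_comm]
  have hroot (u : V) : ∑ v, (T.degree v : ℚ) * T.dist u v =
      2 * ∑ v, (T.dist u v : ℚ) - (Fintype.card V - 1) := by
    have : ∑ v, (T.degree v : ℚ) * T.dist u v + Fintype.card V = 2 * ∑ v, (T.dist u v : ℚ) + 1 := by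
      exact_mod_cast sum_degree_mul_dist_add_card hT u
    linarith
  rw [hsymm, wienerIndex]
  simp_rw [hroot, sum_sub_distrib, ← mul_sum, sum_const, card_univ, nsmul_eq_mul]
  ring
end

section
/- Let T be a tree on a finite nonempty vertex type V with n = |V| vertices. Then the Wiener index of T satisfies W(T) ≤ (n+1)n(n−1)/6, i.e., W(T) ≤ C(n+1,3). -/
/-!
Every connected graph with more than one vertex has a vertex `v` whose deletion leaves it connected.
Deleting `v` can only lengthen the remaining distances, so the Wiener index drops by at most
`∑ u, dist v u`. Every level between `0` and the eccentricity of `v` is occupied, so this sum is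
largest when each level holds one vertex, which gives `0 + 1 + ⋯ + (n - 1) = C(n, 2)`. Pascal's rule
`C(n, 3) + C(n, 2) = C(n + 1, 3)` closes the induction.
-/

theorem cast_add_one_choose_three (K : Type*) [Field K] [CharZero K] (n : ℕ) :
    ((n + 1).choose 3 : K) = ((n : K) + 1) * n * (n - 1) / 6 := by
  have h : ((n : K) + 1) * n.choose 2 = (n + 1).choose 3 * 3 := by
    exact_mod_cast Nat.add_one_mul_choose_eq n 2
  rw [Nat.cast_choose_two] at h
  linear_combination -h / 3

theorem sum_le_choose_two_of_isLowerSet_image {ι : Type*} {f : ι → ℕ} {s : Finset ι}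
    (hf : IsLowerSet (f '' s)) : ∑ i ∈ s, f i ≤ s.card.choose 2 := by
  classical
  induction s using Finset.induction_on_max_value f with
  | empty => simp
  | insert a s ha hmax ih =>
    rw [Finset.coe_insert, Set.image_insert_eq] at hf
    have hs : IsLowerSet (f '' s) := by
      rintro _ m hm ⟨i, hi, rfl⟩
      rcases hf hm (.inr ⟨i, hi, rfl⟩) with rfl | h
      · exact ⟨i, hi, (hmax i hi).antisymm hm⟩
      · exact h
    have hfa : f a ≤ s.card := by
      have hsub : Finset.range (f a) ⊆ s.image f := fun m hm ↦ by
        have hlt : m < f a := Finset.mem_range.1 hm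
        simpa using (hf hlt.le (.inl rfl)).resolve_left hlt.ne
      simpa using (Finset.card_le_card hsub).trans Finset.card_image_le
    calc ∑ i ∈ insert a s, f i = f a + ∑ i ∈ s, f i := Finset.sum_insert ha
      _ ≤ s.card + s.card.choose 2 := Nat.add_le_add hfa (ih hs)
      _ = (insert a s).card.choose 2 := by
        rw [Finset.card_insert_of_notMem ha, Nat.choose_succ_succ' s.card 1, Nat.choose_one_right]

section Distance

variable {V : Type*} (G : SimpleGraph V)

theorem isLowerSet_range_dist (v : V) : IsLowerSet (Set.range (G.dist v)) := by
  rintro _ m hm ⟨u, rfl⟩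
  obtain h | h := eq_or_ne (G.dist v u) 0
  · exact ⟨v, by rw [SimpleGraph.dist_self]; omega⟩
  obtain ⟨p, hp⟩ := SimpleGraph.exists_walk_of_dist_ne_zero h
  refine ⟨p.getVert m, ?_⟩
  rw [← SimpleGraph.length_eq_dist_of_subwalk hp (p.isSubwalk_take m), p.take_length, hp,
    min_eq_left hm]

theorem sum_dist_le_choose_two [Fintype V] (v : V) :
    ∑ u, G.dist v u ≤ (Fintype.card V).choose 2 :=
  sum_le_choose_two_of_isLowerSet_image (by simpa using isLowerSet_range_dist G v)

variable {G}

theorem dist_map_le_of_reachable {W : Type*} {H : SimpleGraph W} (f : G →g H) {u v : V}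
    (h : G.Reachable u v) : H.dist (f u) (f v) ≤ G.dist u v := by
  obtain ⟨p, hp⟩ := h.exists_walk_length_eq_dist
  rw [← hp, ← p.length_map f]
  exact SimpleGraph.dist_le _

theorem sum_sum_dist_eq_sum_compl_singleton_add [Fintype V] (v : V)
    [Fintype ({v}ᶜ : Set V)] :
    ∑ u, ∑ w, G.dist u w =
      (∑ x : ({v}ᶜ : Set V), ∑ y : ({v}ᶜ : Set V), G.dist x y) + 2 * ∑ u, G.dist v u := by
  classical
  have split (f : V → ℕ) : ∑ u, f u = f v + ∑ x : ({v}ᶜ : Set V), f x := by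
    rw [Fintype.sum_eq_add_sum_compl v f, Finset.sum_set_coe, Set.toFinset_compl,
      Set.toFinset_singleton]
  have row (u : V) : ∑ w, G.dist u w = G.dist v u + ∑ y : ({v}ᶜ : Set V), G.dist u y := by
    rw [split, G.dist_comm]
  have rowv : ∑ x : ({v}ᶜ : Set V), G.dist v x = ∑ u, G.dist v u := by
    simp [split (G.dist v)]
  rw [split, Finset.sum_congr rfl fun (x : ({v}ᶜ : Set V)) _ ↦ row x, Finset.sum_add_distrib, rowv]
  ring

end Distance

section WienerIndex

variable {V : Type*} [Fintype V] {G : SimpleGraph V}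

theorem wienerIndex_of_subsingleton [Subsingleton V] : wienerIndex G = 0 := by
  have hdist (u v : V) : G.dist u v = 0 := Subsingleton.elim u v ▸ G.dist_self
  simp [wienerIndex, hdist]

theorem wienerIndex_le_wienerIndex_induce_compl_singleton_add (v : V) [Fintype ({v}ᶜ : Set V)]
    (h : (G.induce {v}ᶜ).Preconnected) :
    wienerIndex G ≤ wienerIndex (G.induce {v}ᶜ) + (∑ u, G.dist v u : ℕ) := by
  have hdist : ∑ x : ({v}ᶜ : Set V), ∑ y : ({v}ᶜ : Set V), G.dist x y ≤
      ∑ x, ∑ y, (G.induce {v}ᶜ).dist x y :=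
    Finset.sum_le_sum fun x _ ↦ Finset.sum_le_sum fun y _ ↦
      dist_map_le_of_reachable (SimpleGraph.Embedding.induce _).toHom (h x y)
  have hsum : ∑ u, ∑ w, G.dist u w ≤
      ∑ x, ∑ y, (G.induce {v}ᶜ).dist x y + 2 * ∑ u, G.dist v u := by
    rw [sum_sum_dist_eq_sum_compl_singleton_add v]
    gcongr
  have hsum' : (∑ u, ∑ w, (G.dist u w : ℚ)) ≤
      ∑ x, ∑ y, ((G.induce {v}ᶜ).dist x y : ℚ) + 2 * (∑ u, G.dist v u : ℕ) := by
    exact_mod_cast hsum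
  unfold wienerIndex
  linarith

end WienerIndex

theorem wiener_upper_bound_general {V : Type*} [Fintype V] (G : SimpleGraph V)
    (hG : G.Connected) : wienerIndex G ≤ (Fintype.card V + 1).choose 3 := by
  classical
  induction hn : Fintype.card V generalizing V with
  | zero =>
    have := hG.nonempty
    exact absurd hn Fintype.card_ne_zero
  | succ n ih =>
    obtain _ | _ := subsingleton_or_nontrivial V
    · rw [wienerIndex_of_subsingleton]
      positivity
    obtain ⟨v, hv⟩ := hG.exists_connected_induce_compl_singleton_of_finite_nontrivial
    have hcard : Fintype.card ({v}ᶜ : Set V) = n := by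
      rw [Fintype.card_compl_set, hn, Set.card_singleton, Nat.add_sub_cancel]
    calc wienerIndex G
        ≤ wienerIndex (G.induce {v}ᶜ) + (∑ u, G.dist v u : ℕ) :=
          wienerIndex_le_wienerIndex_induce_compl_singleton_add v hv.preconnected
      _ ≤ (n + 1).choose 3 + (n + 1).choose 2 := by
          gcongr
          · exact ih _ hv hcard
          · exact hn ▸ sum_dist_le_choose_two G v
      _ = (n + 1 + 1).choose 3 := by
          rw [Nat.choose_succ_succ' (n + 1) 2, Nat.cast_add, add_comm]

theorem wiener_upper_bound {V : Type*} [Fintype V] [Nonempty V]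
    (T : SimpleGraph V) (hT : T.IsTree) :
    wienerIndex T ≤
      ((Fintype.card V : ℚ) + 1) * (Fintype.card V : ℚ) * ((Fintype.card V : ℚ) - 1) / 6 :=
  (wiener_upper_bound_general T hT.connected).trans_eq (cast_add_one_choose_three ℚ _)
end
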